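/- Let p be a prime and G an abelian group of order pⁿ whose Schur multiplier has order p^{n(n−1)/2 − 5}. Then G is isomorphic to ℤ/p³ × ℤ/p or to ℤ/p² × (ℤ/p)⁴. -/

import Mathlib

/-- The canonical presentation map `FreeGroup G →* G`. -/
def presentation (G : Type*) [Group G] : FreeGroup G →* G := FreeGroup.lift id

/-- The Schur multiplier `M(G) ≅ H₂(G, ℤ)` of a group `G`, defined via Hopf's formula
`M(G) = (R ∩ [F,F]) / [F,R]` for the free presentation `F = FreeGroup G`,
`R = ker(F →* G)`. -/
def SchurMultiplier (G : Type*) [Group G] : Type _ :=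
  ↥((presentation G).ker ⊓ commutator (FreeGroup G)) ⧸
    (⁅(⊤ : Subgroup (FreeGroup G)), (presentation G).ker⁆.subgroupOf
      ((presentation G).ker ⊓ commutator (FreeGroup G)))

noncomputable instance (G : Type*) [Group G] : Group (SchurMultiplier G) :=
  QuotientGroup.Quotient.group _

/-! For abelian `G` the commutator pairing, which sends `(x, y)` to the class of `⁅u, v⁆` for any
lifts `u`, `v` of `x`, `y` to the free group, is a bilinear map `G × G → M(G)` whose values generate
`M(G)`. When `G = ∏ i, ℤ/m i`, it therefore induces a surjection from
`∏ i < j, ℤ/gcd(m i, m j)` onto `M(G)`. Conversely, a bilinear map `β` is a 2-cocycle, and the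
central extension it defines gives a homomorphism on `M(G)` sending the class of `⁅u, v⁆` to
`β(x, y) / β(y, x)`; taking `β` upper triangular shows that the surjection is injective.

For `m i = p ^ (y i + 1)` the condition on `|M(G)|` becomes
`∑ i, ∑ j, (y i y j + max(y i, y j)) = 10`. With `D = ∑ i, y i` and `k` the number of factors, the
sum is at least `D (D + k)`, so `D ≤ 2`. If every `y i ≤ 1` the sum is `2 k D`, which excludes
`D = 2`; hence a single `y i` is nonzero, and its value `1` or `2` determines `k`. -/

open scoped commutatorElement

theorem apply_mem_of_closure_eq_top {G H M : Type*} [Group G] [Group H] [CommGroup M]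
    (f : G →* H →* M) {s : Set G} {t : Set H} (hs : Subgroup.closure s = ⊤)
    (ht : Subgroup.closure t = ⊤) {K : Subgroup M} (h : ∀ x ∈ s, ∀ y ∈ t, f x y ∈ K)
    (x : G) (y : H) : f x y ∈ K := by
  have mem_of_left_mem (x : G) (hx : x ∈ s) (y : H) : f x y ∈ K := by
    have : Subgroup.closure t ≤ K.comap (f x) := (Subgroup.closure_le _).2 (h x hx)
    exact this (ht ▸ Subgroup.mem_top y)
  have : Subgroup.closure s ≤ K.comap (f.flip y) :=
    (Subgroup.closure_le _).2 fun x hx => mem_of_left_mem x hx y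
  exact this (hs ▸ Subgroup.mem_top x)

/-- The central extension of `G` by `A` defined by a bilinear map `β : G × G → A`, regarded as a
2-cocycle: the set `A × G` with `(a, g) (b, h) = (a b β(g, h), g h)`. -/
@[ext]
structure BilinearExtension {G A : Type*} [Group G] [CommGroup A] (β : G →* G →* A) where
  /-- The component in the central subgroup `A`. -/
  fiber : A
  /-- The component in the quotient `G`. -/
  base : G

namespace BilinearExtension

variable {G A : Type*} [Group G] [CommGroup A] {β : G →* G →* A}

instance : Mul (BilinearExtension β) :=
  ⟨fun x y => ⟨x.fiber * y.fiber * β x.base y.base, x.base * y.base⟩⟩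

instance : One (BilinearExtension β) := ⟨⟨1, 1⟩⟩

instance : Inv (BilinearExtension β) := ⟨fun x => ⟨x.fiber⁻¹ * β x.base x.base, x.base⁻¹⟩⟩

@[simp]
theorem mul_fiber (x y : BilinearExtension β) :
    (x * y).fiber = x.fiber * y.fiber * β x.base y.base := rfl

@[simp]
theorem mul_base (x y : BilinearExtension β) : (x * y).base = x.base * y.base := rfl

@[simp]
theorem one_fiber : (1 : BilinearExtension β).fiber = 1 := rfl

@[simp]
theorem one_base : (1 : BilinearExtension β).base = 1 := rfl

@[simp]
theorem inv_fiber (x : BilinearExtension β) : x⁻¹.fiber = x.fiber⁻¹ * β x.base x.base := rfl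

@[simp]
theorem inv_base (x : BilinearExtension β) : x⁻¹.base = x.base⁻¹ := rfl

instance : Group (BilinearExtension β) :=
  Group.ofLeftAxioms
    (fun x y z => by
      ext
      · simp only [mul_fiber, mul_base, map_mul, MonoidHom.mul_apply, mul_assoc,
          mul_comm, mul_left_comm]
      · simp only [mul_base, mul_assoc])
    (fun x => by ext <;> simp)
    (fun x => by ext <;> simp)

/-- The projection of the extension onto its quotient `G`. -/
def proj (β : G →* G →* A) : BilinearExtension β →* G where
  toFun := base
  map_one' := rfl
  map_mul' _ _ := rfl

theorem mul_comm_of_base_eq_one (x : BilinearExtension β) {y : BilinearExtension β}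
    (hy : y.base = 1) : x * y = y * x := by
  ext
  · simp [hy, mul_comm]
  · simp [hy]

theorem commutatorElement_fiber {x y : BilinearExtension β}
    (hxy : x.base * y.base = y.base * x.base) :
    ⁅x, y⁆.fiber = β x.base y.base / β y.base x.base := by
  have base_eq_one : ⁅x, y⁆.base = 1 := by
    rw [← commutatorElement_eq_one_iff_mul_comm] at hxy
    exact (map_commutatorElement (proj β) x y).trans hxy
  have fiber_eq : (⁅x, y⁆ * (y * x)).fiber = (x * y).fiber := by
    rw [commutatorElement_def]
    group
  simp only [mul_fiber, base_eq_one, map_one, MonoidHom.one_apply, mul_one] at fiber_eq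
  rw [eq_div_iff_mul_eq', ← mul_right_inj (x.fiber * y.fiber), ← fiber_eq]
  simp only [mul_assoc, mul_comm, mul_left_comm]

end BilinearExtension

namespace SchurMultiplier

section Group

variable {G : Type*} [Group G]

theorem presentation_of (g : G) : presentation G (FreeGroup.of g) = g :=
  FreeGroup.lift_apply_of

/-- The class in `M(G) = (R ∩ [F, F]) / [F, R]` of an element of `R ∩ [F, F]`. -/
def mk : ↥((presentation G).ker ⊓ commutator (FreeGroup G)) →* SchurMultiplier G :=
  QuotientGroup.mk' _

theorem mk_surjective : Function.Surjective (mk (G := G)) :=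
  QuotientGroup.mk'_surjective _

theorem mk_eq_one_iff {x : ↥((presentation G).ker ⊓ commutator (FreeGroup G))} :
    mk x = 1 ↔ (x : FreeGroup G) ∈ ⁅(⊤ : Subgroup (FreeGroup G)), (presentation G).ker⁆ :=
  (QuotientGroup.eq_one_iff x).trans Subgroup.mem_subgroupOf

theorem mk_eq_mk_of_eq_conj {x y : ↥((presentation G).ker ⊓ commutator (FreeGroup G))}
    (u : FreeGroup G) (h : (x : FreeGroup G) = u * y * u⁻¹) : mk x = mk y := by
  rw [← mul_inv_eq_one, ← map_inv, ← map_mul, mk_eq_one_iff, Subgroup.coe_mul, Subgroup.coe_inv, h]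
  exact Subgroup.commutator_mem_commutator (Subgroup.mem_top u) y.2.1

noncomputable instance : CommGroup (SchurMultiplier G) where
  mul_comm a b := by
    obtain ⟨x, rfl⟩ := mk_surjective a
    obtain ⟨y, rfl⟩ := mk_surjective b
    rw [← mul_inv_eq_iff_eq_mul, ← map_mul, ← map_inv, ← map_mul]
    exact mk_eq_mk_of_eq_conj (x : FreeGroup G) rfl

variable {A : Type*} [CommGroup A] (β : G →* G →* A)

/-- The homomorphism `F → BilinearExtension β` over `G` sending each generator `g` to `(1, g)`. -/
def liftBilinearExtension : FreeGroup G →* BilinearExtension β :=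
  FreeGroup.lift fun g => ⟨1, g⟩

theorem liftBilinearExtension_base (u : FreeGroup G) :
    (liftBilinearExtension β u).base = presentation G u := by
  have : (BilinearExtension.proj β).comp (liftBilinearExtension β) = presentation G := by
    ext g
    simp [liftBilinearExtension, presentation, BilinearExtension.proj]
  exact DFunLike.congr_fun this u

theorem commutator_top_ker_le_ker_liftBilinearExtension :
    ⁅(⊤ : Subgroup (FreeGroup G)), (presentation G).ker⁆ ≤ (liftBilinearExtension β).ker := by
  rw [Subgroup.commutator_le]
  intro u _ r hr
  rw [MonoidHom.mem_ker, map_commutatorElement, commutatorElement_eq_one_iff_mul_comm]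
  apply BilinearExtension.mul_comm_of_base_eq_one
  rw [liftBilinearExtension_base, MonoidHom.mem_ker.1 hr]

/-- The homomorphism `M(G) → A` classifying the central extension `BilinearExtension β`: it is
induced by restricting `F → BilinearExtension β` to `R`, which lands in the fiber `A`. -/
def classifyingHom : SchurMultiplier G →* A :=
  QuotientGroup.lift _
    (MonoidHom.mk' (fun x => (liftBilinearExtension β x).fiber) fun x y => by
      simp [liftBilinearExtension_base, MonoidHom.mem_ker.1 x.2.1])
    fun x hx => by
      have := commutator_top_ker_le_ker_liftBilinearExtension β (Subgroup.mem_subgroupOf.1 hx)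
      simp [MonoidHom.mem_ker.1 this]

theorem classifyingHom_mk (x : ↥((presentation G).ker ⊓ commutator (FreeGroup G))) :
    classifyingHom β (mk x) = (liftBilinearExtension β x).fiber :=
  rfl

end Group

section CommGroup

variable {G : Type*} [CommGroup G]

theorem commutatorElement_mem_ker_inf_commutator (u v : FreeGroup G) :
    ⁅u, v⁆ ∈ (presentation G).ker ⊓ commutator (FreeGroup G) := by
  refine Subgroup.mem_inf.2
    ⟨?_, Subgroup.commutator_mem_commutator (Subgroup.mem_top u) (Subgroup.mem_top v)⟩
  rw [MonoidHom.mem_ker, map_commutatorElement,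
    commutatorElement_eq_one_iff_mul_comm, mul_comm]

/-- The class of the commutator `⁅u, v⁆`, which is a relator because `G` is commutative. -/
noncomputable def commutatorClass (u v : FreeGroup G) : SchurMultiplier G :=
  mk ⟨⁅u, v⁆, commutatorElement_mem_ker_inf_commutator u v⟩

theorem commutatorClass_mul_left (u v w : FreeGroup G) :
    commutatorClass (u * v) w = commutatorClass u w * commutatorClass v w := by
  have conj_mem : u * ⁅v, w⁆ * u⁻¹ ∈ (presentation G).ker ⊓ commutator (FreeGroup G) := by
    rw [conjugate_commutatorElement]
    exact commutatorElement_mem_ker_inf_commutator _ _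
  calc commutatorClass (u * v) w
      = mk ⟨u * ⁅v, w⁆ * u⁻¹, conj_mem⟩ * commutatorClass u w := by
        rw [commutatorClass, commutatorClass, ← map_mul]
        exact congrArg mk (Subtype.ext (commutatorElement_mul_left_eq_conj_mul u v w))
    _ = commutatorClass v w * commutatorClass u w :=
        congrArg (· * commutatorClass u w) (mk_eq_mk_of_eq_conj u rfl)
    _ = commutatorClass u w * commutatorClass v w := mul_comm _ _

theorem commutatorClass_inv (u v : FreeGroup G) :
    (commutatorClass u v)⁻¹ = commutatorClass v u := by
  rw [commutatorClass, ← map_inv]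
  exact congrArg mk (Subtype.ext (commutatorElement_inv u v))

theorem commutatorClass_mul_right (u v w : FreeGroup G) :
    commutatorClass u (v * w) = commutatorClass u v * commutatorClass u w := by
  simp only [← commutatorClass_inv _ u, commutatorClass_mul_left, mul_inv]

theorem commutatorClass_congr_right (u : FreeGroup G) {v w : FreeGroup G}
    (h : presentation G v = presentation G w) : commutatorClass u v = commutatorClass u w := by
  have ratio_mem_ker : w⁻¹ * v ∈ (presentation G).ker := by
    rw [MonoidHom.mem_ker, map_mul, map_inv, h, inv_mul_cancel]
  have ratio_class : commutatorClass u (w⁻¹ * v) = 1 :=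
    mk_eq_one_iff.2 (Subgroup.commutator_mem_commutator (Subgroup.mem_top u) ratio_mem_ker)
  rw [← mul_inv_cancel_left w v, commutatorClass_mul_right, ratio_class, mul_one]

theorem commutatorClass_congr {u u' v v' : FreeGroup G}
    (hu : presentation G u = presentation G u') (hv : presentation G v = presentation G v') :
    commutatorClass u v = commutatorClass u' v' := by
  rw [commutatorClass_congr_right u hv, ← commutatorClass_inv v' u,
    commutatorClass_congr_right v' hu, commutatorClass_inv]

/-- The bilinear map `G × G → M(G)` sending `(x, y)` to the class of the commutator of any lifts of
`x` and `y` to the free group. -/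
noncomputable def pairing : G →* G →* SchurMultiplier G :=
  MonoidHom.mk' (fun x => MonoidHom.mk' (fun y => commutatorClass (.of x) (.of y)) fun y z => by
      rw [← commutatorClass_mul_right]
      exact commutatorClass_congr rfl (by simp only [map_mul, presentation_of]))
    fun x y => by
      ext z
      simp only [MonoidHom.mk'_apply, MonoidHom.mul_apply]
      rw [← commutatorClass_mul_left]
      exact commutatorClass_congr (by simp only [map_mul, presentation_of]) rfl

theorem pairing_apply (x y : G) : pairing x y = commutatorClass (.of x) (.of y) := rfl

theorem pairing_presentation (u v : FreeGroup G) :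
    pairing (presentation G u) (presentation G v) = commutatorClass u v :=
  commutatorClass_congr (presentation_of _) (presentation_of _)

theorem pairing_self (x : G) : pairing x x = 1 := by
  rw [pairing_apply, commutatorClass, mk_eq_one_iff]
  simp only [commutatorElement_self, one_mem]

theorem pairing_inv (x y : G) : (pairing x y)⁻¹ = pairing y x :=
  commutatorClass_inv _ _

theorem eq_top_of_pairing_mem {K : Subgroup (SchurMultiplier G)} (h : ∀ x y, pairing x y ∈ K) :
    K = ⊤ := by
  have commutator_le : commutator (FreeGroup G) ≤
      (K.comap mk).map ((presentation G).ker ⊓ commutator (FreeGroup G)).subtype := by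
    refine Subgroup.commutator_le.2 fun u _ v _ => ?_
    have commutatorClass_mem := h (presentation G u) (presentation G v)
    rw [pairing_presentation] at commutatorClass_mem
    exact ⟨⟨⁅u, v⁆, commutatorElement_mem_ker_inf_commutator u v⟩, commutatorClass_mem, rfl⟩
  rw [eq_top_iff]
  intro a _
  obtain ⟨x, rfl⟩ := mk_surjective a
  obtain ⟨y, hy, hyx⟩ := commutator_le x.2.2
  rwa [← Subtype.ext hyx]

theorem classifyingHom_pairing {A : Type*} [CommGroup A] (β : G →* G →* A) (x y : G) :
    classifyingHom β (pairing x y) = β x y / β y x := by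
  rw [pairing_apply, commutatorClass, classifyingHom_mk, map_commutatorElement,
    BilinearExtension.commutatorElement_fiber (mul_comm _ _)]
  simp only [liftBilinearExtension_base, presentation_of]

end CommGroup

end SchurMultiplier

section CyclicProducts

theorem zpowers_ofAdd_one_eq_top (n : ℕ) :
    Subgroup.zpowers (Multiplicative.ofAdd (1 : ZMod n)) = ⊤ := by
  refine eq_top_iff.2 fun x _ => ?_
  obtain ⟨k, hk⟩ := ZMod.intCast_surjective x.toAdd
  exact ⟨k, Multiplicative.toAdd.injective (by simp [← hk])⟩

/-- The homomorphism from the cyclic group of order `n` sending its standard generator to `c`. -/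
def cyclicLift {C : Type*} [CommGroup C] {n : ℕ} (c : C) (hc : c ^ n = 1) :
    Multiplicative (ZMod n) →* C :=
  AddMonoidHom.toMultiplicativeLeft
    (ZMod.lift n ⟨zmultiplesHom (Additive C) (Additive.ofMul c), by
      rw [zmultiplesHom_apply, natCast_zsmul, ← ofMul_pow, hc, ofMul_one]⟩)

@[simp]
theorem cyclicLift_ofAdd_one {C : Type*} [CommGroup C] {n : ℕ} (c : C) (hc : c ^ n = 1) :
    cyclicLift c hc (Multiplicative.ofAdd 1) = c := by
  have := ZMod.lift_coe n ⟨zmultiplesHom (Additive C) (Additive.ofMul c), by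
      rw [zmultiplesHom_apply, natCast_zsmul, ← ofMul_pow, hc, ofMul_one]⟩ 1
  rw [Int.cast_one] at this
  simpa [cyclicLift] using congrArg Additive.toMul this

theorem ofAdd_one_pow_eq_one {n k : ℕ} (h : n ∣ k) :
    Multiplicative.ofAdd (1 : ZMod n) ^ k = 1 := by
  rw [← ofAdd_nsmul, nsmul_one, (ZMod.natCast_eq_zero_iff k n).2 h, ofAdd_zero]

variable {ι : Type*} (m : ι → ℕ)

/-- The standard generator of the `i`-th factor of a product of cyclic groups. -/
def cyclicGen [DecidableEq ι] (i : ι) : ∀ i, Multiplicative (ZMod (m i)) :=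
  Pi.mulSingle i (Multiplicative.ofAdd 1)

theorem cyclicGen_pow [DecidableEq ι] (i : ι) : cyclicGen m i ^ m i = 1 := by
  rw [cyclicGen, ← Pi.mulSingle_pow, ofAdd_one_pow_eq_one dvd_rfl, Pi.mulSingle_one]

theorem closure_range_cyclicGen [Finite ι] [DecidableEq ι] :
    Subgroup.closure (Set.range (cyclicGen m)) = ⊤ := by
  rw [eq_top_iff, ← Subgroup.pi_top Set.univ, Subgroup.pi_le_iff]
  intro i
  rw [← zpowers_ofAdd_one_eq_top, MonoidHom.map_zpowers, Subgroup.zpowers_le]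
  exact Subgroup.subset_closure ⟨i, rfl⟩

/-- The bilinear map `ℤ/a × ℤ/b → ℤ/gcd(a, b)` sending the pair of generators to the generator. -/
def cyclicPairing (a b : ℕ) :
    Multiplicative (ZMod a) →* Multiplicative (ZMod b) →* Multiplicative (ZMod (a.gcd b)) :=
  cyclicLift (cyclicLift (Multiplicative.ofAdd 1) (ofAdd_one_pow_eq_one (Nat.gcd_dvd_right a b)))
    (by
      refine MonoidHom.eq_of_eqOn_dense (s := {Multiplicative.ofAdd 1}) ?_ ?_
      · rw [← Subgroup.zpowers_eq_closure, zpowers_ofAdd_one_eq_top]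
      · simp [ofAdd_one_pow_eq_one (Nat.gcd_dvd_left a b)])

theorem cyclicPairing_ofAdd_one (a b : ℕ) :
    cyclicPairing a b (Multiplicative.ofAdd 1) (Multiplicative.ofAdd 1) =
      Multiplicative.ofAdd 1 := by
  simp [cyclicPairing]

variable [LinearOrder ι]

/-- The index set of the pairs `i < j`. -/
abbrev IncreasingPair (ι : Type*) [LT ι] : Type _ := {q : ι × ι // q.1 < q.2}

/-- The order of the cyclic factor indexed by the pair `i < j` in the exterior square of
`∏ i, ℤ/m i`. -/
abbrev pairGCD (q : IncreasingPair ι) : ℕ := (m q.1.1).gcd (m q.1.2)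

/-- The upper triangular bilinear map on `∏ i, ℤ/m i` with values in `∏ i < j, ℤ/gcd(m i, m j)`. -/
def upperPairing : (∀ i, Multiplicative (ZMod (m i))) →* (∀ i, Multiplicative (ZMod (m i))) →*
    ∀ q : IncreasingPair ι, Multiplicative (ZMod (pairGCD m q)) :=
  MonoidHom.mk' (fun x => MonoidHom.pi fun q =>
    (cyclicPairing (m q.1.1) (m q.1.2) (x q.1.1)).comp (Pi.evalMonoidHom _ q.1.2))
    fun x y => by
      ext z q : 2
      simp only [MonoidHom.pi_apply, MonoidHom.mul_apply, MonoidHom.comp_apply, Pi.mul_apply,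
        map_mul]

theorem upperPairing_apply (x y : ∀ i, Multiplicative (ZMod (m i))) (q : IncreasingPair ι) :
    upperPairing m x y q = cyclicPairing (m q.1.1) (m q.1.2) (x q.1.1) (y q.1.2) :=
  rfl

theorem upperPairing_cyclicGen_apply_of_ne {i j : ι} {q : IncreasingPair ι} (h : q.1 ≠ (i, j)) :
    upperPairing m (cyclicGen m i) (cyclicGen m j) q = 1 := by
  rw [upperPairing_apply]
  rcases not_and_or.1 (mt Prod.ext_iff.2 h) with hi | hj
  · rw [cyclicGen, Pi.mulSingle_eq_of_ne hi, map_one, MonoidHom.one_apply]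
  · rw [cyclicGen, cyclicGen, Pi.mulSingle_eq_of_ne hj, map_one]

theorem upperPairing_cyclicGen_of_lt {i j : ι} (h : i < j) :
    upperPairing m (cyclicGen m i) (cyclicGen m j) = cyclicGen (pairGCD m) ⟨(i, j), h⟩ := by
  funext q
  by_cases hq : q = ⟨(i, j), h⟩
  · subst hq
    simp only [upperPairing_apply, cyclicGen, Pi.mulSingle_eq_same]
    exact cyclicPairing_ofAdd_one (m i) (m j)
  · rw [upperPairing_cyclicGen_apply_of_ne m fun h' => hq (Subtype.ext h'), cyclicGen,
      Pi.mulSingle_eq_of_ne hq]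

theorem upperPairing_cyclicGen_of_gt {i j : ι} (h : j < i) :
    upperPairing m (cyclicGen m i) (cyclicGen m j) = 1 := by
  funext q
  refine upperPairing_cyclicGen_apply_of_ne m fun hq => h.not_gt ?_
  simpa only [hq] using q.2

end CyclicProducts

namespace SchurMultiplier

variable {ι : Type*} [LinearOrder ι] {m : ι → ℕ} {G : Type*} [CommGroup G]
  (e : G ≃* ∀ i, Multiplicative (ZMod (m i)))

theorem pairing_pow_pairGCD (q : IncreasingPair ι) :
    pairing (e.symm (cyclicGen m q.1.1)) (e.symm (cyclicGen m q.1.2)) ^ pairGCD m q = 1 := by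
  rw [← orderOf_dvd_iff_pow_eq_one]
  refine Nat.dvd_gcd ?_ ?_
  · rw [orderOf_dvd_iff_pow_eq_one, ← MonoidHom.pow_apply, ← map_pow, ← map_pow, cyclicGen_pow]
    simp
  · rw [orderOf_dvd_iff_pow_eq_one, ← map_pow, ← map_pow, cyclicGen_pow]
    simp

variable [Fintype ι]

/-- The homomorphism `∏ i < j, ℤ/gcd(m i, m j) → M(G)` sending the generator indexed by `i < j` to
the pairing of the generators of `G` indexed by `i` and `j`. -/
noncomputable def ofCyclicPairs :
    (∀ q : IncreasingPair ι, Multiplicative (ZMod (pairGCD m q))) →* SchurMultiplier G :=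
  (Pi.monoidHomMulEquiv _ _).symm fun q => cyclicLift _ (pairing_pow_pairGCD e q)

theorem ofCyclicPairs_cyclicGen (q : IncreasingPair ι) :
    ofCyclicPairs e (cyclicGen (pairGCD m) q) =
      pairing (e.symm (cyclicGen m q.1.1)) (e.symm (cyclicGen m q.1.2)) := by
  have restrict_factor := congrFun ((Pi.monoidHomMulEquiv _ _).apply_symm_apply
    fun q : IncreasingPair ι => cyclicLift _ (pairing_pow_pairGCD e q)) q
  exact (DFunLike.congr_fun restrict_factor (Multiplicative.ofAdd 1)).trans
    (cyclicLift_ofAdd_one _ _)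

theorem ofCyclicPairs_surjective : Function.Surjective (ofCyclicPairs e) := by
  rw [← MonoidHom.range_eq_top]
  have gens : Subgroup.closure (Set.range fun i => e.symm (cyclicGen m i)) = ⊤ := by
    have := congrArg (Subgroup.map e.symm.toMonoidHom) (closure_range_cyclicGen m)
    rwa [MonoidHom.map_closure, ← Set.range_comp,
      Subgroup.map_top_of_surjective _ e.symm.surjective] at this
  refine eq_top_of_pairing_mem (apply_mem_of_closure_eq_top _ gens gens ?_)
  have mem_of_lt {i j : ι} (h : i < j) :
      pairing (e.symm (cyclicGen m i)) (e.symm (cyclicGen m j)) ∈ (ofCyclicPairs e).range :=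
    ⟨_, ofCyclicPairs_cyclicGen e ⟨(i, j), h⟩⟩
  rintro _ ⟨i, rfl⟩ _ ⟨j, rfl⟩
  rcases lt_trichotomy i j with h | rfl | h
  · exact mem_of_lt h
  · rw [pairing_self]
    exact one_mem _
  · rw [← pairing_inv]
    exact inv_mem (mem_of_lt h)

theorem ofCyclicPairs_injective : Function.Injective (ofCyclicPairs e) := by
  let β := ((upperPairing m).comp e.toMonoidHom).compl₂ e.toMonoidHom
  have left_inverse : (classifyingHom β).comp (ofCyclicPairs e) = MonoidHom.id _ := by
    refine MonoidHom.eq_of_eqOn_dense (closure_range_cyclicGen _) ?_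
    rintro _ ⟨q, rfl⟩
    simp [ofCyclicPairs_cyclicGen, classifyingHom_pairing, β, upperPairing_cyclicGen_of_lt m q.2,
      upperPairing_cyclicGen_of_gt m q.2]
  exact Function.LeftInverse.injective (DFunLike.congr_fun left_inverse)

/-- The isomorphism `∏ i < j, ℤ/gcd(m i, m j) ≃ M(G)` for `G ≃ ∏ i, ℤ/m i`. -/
noncomputable def cyclicPairsEquiv :
    (∀ q : IncreasingPair ι, Multiplicative (ZMod (pairGCD m q))) ≃* SchurMultiplier G :=
  MulEquiv.ofBijective (ofCyclicPairs e) ⟨ofCyclicPairs_injective e, ofCyclicPairs_surjective e⟩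

theorem natCard_eq_prod_pairGCD (e : G ≃* ∀ i, Multiplicative (ZMod (m i))) :
    Nat.card (SchurMultiplier G) = ∏ q : IncreasingPair ι, pairGCD m q := by
  rw [← Nat.card_congr (cyclicPairsEquiv e).toEquiv, Nat.card_pi]
  exact Finset.prod_congr rfl fun q _ => Nat.card_zmod _

end SchurMultiplier

theorem natCard_pi_zmod_pow {ι : Type*} [Fintype ι] (p : ℕ) (x : ι → ℕ) :
    Nat.card (∀ i, Multiplicative (ZMod (p ^ x i))) = p ^ ∑ i, x i := by
  rw [Nat.card_pi, ← Finset.prod_pow_eq_pow_sum]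
  exact Finset.prod_congr rfl fun i _ => Nat.card_zmod _

theorem gcd_pow_pow_eq_pow_min (p a b : ℕ) : (p ^ a).gcd (p ^ b) = p ^ min a b := by
  rcases le_total a b with h | h
  · rw [min_eq_left h, Nat.gcd_eq_left (pow_dvd_pow p h)]
  · rw [min_eq_right h, Nat.gcd_eq_right (pow_dvd_pow p h)]

theorem exists_mulEquiv_pi_zmod_prime_pow {p : ℕ} (hp : p.Prime) {G : Type*} [CommGroup G]
    [Finite G] (hG : IsPGroup p G) :
    ∃ (ι : Type) (_ : Fintype ι) (y : ι → ℕ),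
      Nonempty (G ≃* ∀ i, Multiplicative (ZMod (p ^ (y i + 1)))) := by
  have : Fact p.Prime := ⟨hp⟩
  obtain ⟨ι, _, m, one_lt, ⟨e⟩⟩ := CommGroup.equiv_prod_multiplicative_zmod_of_finite G
  have factor_eq_pow (i : ι) : ∃ y, m i = p ^ (y + 1) := by
    have : NeZero (m i) := ⟨(one_lt i).ne_bot⟩
    have factor_isPGroup : IsPGroup p (Multiplicative (ZMod (m i))) :=
      hG.of_surjective ((Pi.evalMonoidHom _ i).comp e.toMonoidHom)
        ((Function.surjective_eval i).comp e.surjective)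
    obtain ⟨x, hx⟩ := IsPGroup.iff_card.1 factor_isPGroup
    have hx : m i = p ^ x := (Nat.card_zmod (m i)).symm.trans hx
    cases x with
    | zero => exact absurd hx (one_lt i).ne'
    | succ y => exact ⟨y, hx⟩
  choose y hy using factor_eq_pow
  obtain rfl : m = fun i => p ^ (y i + 1) := funext hy
  exact ⟨ι, inferInstance, y, ⟨e⟩⟩

theorem nonempty_pi_zmod_mulEquiv_prod {ι : Type*} [Fintype ι] {m : ι → ℕ} {k b : ℕ} (i : ι)
    (hcard : Fintype.card ι = k + 1) (hm : ∀ j ≠ i, m j = b) :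
    Nonempty ((∀ j, Multiplicative (ZMod (m j))) ≃*
      Multiplicative (ZMod (m i)) × (Fin k → Multiplicative (ZMod b))) := by
  classical
  have card_ne : Fintype.card {j // j ≠ i} = k := by
    rw [Fintype.card_subtype_compl, Fintype.card_subtype_eq, hcard, Nat.add_sub_cancel]
  let splitAt : (∀ j, Multiplicative (ZMod (m j))) ≃*
      Multiplicative (ZMod (m i)) × ∀ j : {j // j ≠ i}, Multiplicative (ZMod (m j)) :=
    { Equiv.piSplitAt i fun j => Multiplicative (ZMod (m j)) with map_mul' := fun _ _ => rfl }
  let castFactors : (∀ j : {j // j ≠ i}, Multiplicative (ZMod (m j))) ≃*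
      ({j // j ≠ i} → Multiplicative (ZMod b)) :=
    MulEquiv.piCongrRight fun j => (ZMod.ringEquivCongr (hm j j.2)).toAddEquiv.toMultiplicative
  exact ⟨splitAt.trans ((MulEquiv.refl _).prodCongr (castFactors.trans
    (MulEquiv.arrowCongr (Fintype.equivFinOfCardEq card_ne) (MulEquiv.refl _))))⟩

section PairDefect

variable {ι : Type*} [Fintype ι]

/-- Twice the exponent `t` in `|M(G)| = p ^ (n (n - 1) / 2 - t)` for the group
`G = ∏ i, ℤ/p ^ (y i + 1)` of order `p ^ n`. Shifting the exponents by one makes every summand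
nonnegative, with value zero for elementary abelian `G`. -/
def pairDefect (y : ι → ℕ) : ℕ := ∑ i, ∑ j, (y i * y j + max (y i) (y j))

theorem sum_succ_mul_sum_succ_eq_pairDefect_add (y : ι → ℕ) :
    (∑ i, (y i + 1)) * ∑ i, (y i + 1) =
      pairDefect y + ∑ i, ∑ j, min (y i + 1) (y j + 1) := by
  simp only [pairDefect, Finset.sum_mul_sum, ← Finset.sum_add_distrib]
  refine Finset.sum_congr rfl fun i _ => Finset.sum_congr rfl fun j _ => ?_
  have := max_add_min (y i) (y j)
  rw [min_add_add_right]
  linear_combination -this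

theorem sum_mul_sum_add_card_le_pairDefect (y : ι → ℕ) :
    (∑ i, y i) * (∑ i, y i + Fintype.card ι) ≤ pairDefect y := by
  calc (∑ i, y i) * (∑ i, y i + Fintype.card ι) = ∑ i, ∑ j, (y i * y j + y i) := by
        simp only [Finset.sum_add_distrib, Finset.sum_const, mul_add, Finset.sum_mul_sum,
          Finset.card_univ, smul_eq_mul, ← Finset.mul_sum]
        ring
    _ ≤ pairDefect y := by
        unfold pairDefect
        gcongr
        exact le_max_left _ _

theorem pairDefect_of_le_one {y : ι → ℕ} (hy : ∀ i, y i ≤ 1) :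
    pairDefect y = 2 * Fintype.card ι * ∑ i, y i := by
  have summand_eq (i j : ι) : y i * y j + max (y i) (y j) = y i + y j := by
    have hi := hy i
    have hj := hy j
    interval_cases y i <;> interval_cases y j <;> rfl
  simp only [pairDefect, summand_eq, Finset.sum_add_distrib, Finset.sum_const, Finset.card_univ,
    smul_eq_mul, ← Finset.mul_sum]
  ring

theorem pairDefect_single_add [DecidableEq ι] (i : ι) (c : ℕ) :
    pairDefect (Pi.single i c) + c = c * (c + 2 * Fintype.card ι) := by
  set y : ι → ℕ := Pi.single i c
  have sum_y : ∑ j, y j = c := Fintype.sum_pi_single' i c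
  have sum_min : ∑ j, ∑ k, min (y j) (y k) = c := by
    rw [Fintype.sum_eq_single i, Fintype.sum_eq_single i]
    · simp [y]
    · intro k hk
      simp [y, hk]
    · intro j hj
      simp [y, hj]
  calc pairDefect y + c = ∑ j, ∑ k, (y j * y k + (y j + y k)) := by
        conv_lhs => rw [pairDefect, ← sum_min]
        simp only [← Finset.sum_add_distrib, add_assoc, max_add_min]
    _ = c * (c + 2 * Fintype.card ι) := by
        simp only [Finset.sum_add_distrib, Finset.sum_const, Finset.card_univ, smul_eq_mul,
          ← Finset.mul_sum, ← Finset.sum_mul, sum_y]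
        ring

theorem eq_single_of_sum_le [DecidableEq ι] {y : ι → ℕ} {i : ι} (h : ∑ j, y j ≤ y i) :
    y = Pi.single i (y i) := by
  funext j
  rcases eq_or_ne j i with rfl | hj
  · rw [Pi.single_eq_same]
  · have : y i + y j ≤ ∑ j, y j := by
      rw [← Finset.sum_pair hj.symm]
      exact Finset.sum_le_sum_of_subset (Finset.subset_univ _)
    rw [Pi.single_eq_of_ne hj]
    omega

theorem sum_mem_Icc_of_pairDefect_eq_ten {y : ι → ℕ} (h : pairDefect y = 10) :
    ∑ i, y i ∈ Finset.Icc 1 2 := by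
  have bound : (∑ i, y i) * (∑ i, y i + Fintype.card ι) ≤ 10 :=
    h ▸ sum_mul_sum_add_card_le_pairDefect y
  have sum_ne_zero : ∑ i, y i ≠ 0 := by
    intro sum_eq_zero
    have y_eq_zero : ∀ i, y i = 0 := by simpa using sum_eq_zero
    simp [pairDefect, y_eq_zero] at h
  have card_pos : 0 < Fintype.card ι := by
    obtain ⟨i, -, -⟩ := Finset.exists_ne_zero_of_sum_ne_zero sum_ne_zero
    exact Fintype.card_pos_iff.2 ⟨i⟩
  rw [Finset.mem_Icc]
  refine ⟨Nat.one_le_iff_ne_zero.2 sum_ne_zero, ?_⟩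
  by_contra! three_le
  nlinarith

theorem exists_sum_le_of_pairDefect_eq_ten {y : ι → ℕ} (h : pairDefect y = 10) :
    ∃ i, ∑ j, y j ≤ y i := by
  obtain ⟨one_le, le_two⟩ := Finset.mem_Icc.1 (sum_mem_Icc_of_pairDefect_eq_ten h)
  by_cases two_le : ∃ i, 2 ≤ y i
  · obtain ⟨i, hi⟩ := two_le
    exact ⟨i, le_two.trans hi⟩
  · push Not at two_le
    have two_mul_card_mul_sum := pairDefect_of_le_one fun i => Nat.le_of_lt_succ (two_le i)
    rw [h] at two_mul_card_mul_sum
    have sum_eq_one : ∑ j, y j = 1 := by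
      interval_cases ∑ j, y j <;> omega
    obtain ⟨i, -, hi⟩ := Finset.exists_ne_zero_of_sum_ne_zero (sum_eq_one.trans_ne one_ne_zero)
    exact ⟨i, sum_eq_one.trans_le (Nat.one_le_iff_ne_zero.2 hi)⟩

theorem exists_eq_single_of_pairDefect_eq_ten [DecidableEq ι] {y : ι → ℕ}
    (h : pairDefect y = 10) :
    (Fintype.card ι = 2 ∧ ∃ i, y = Pi.single i 2) ∨
      (Fintype.card ι = 5 ∧ ∃ i, y = Pi.single i 1) := by
  obtain ⟨i, i_concentrated⟩ := exists_sum_le_of_pairDefect_eq_ten h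
  obtain ⟨c, rfl⟩ : ∃ c, y = Pi.single i c := ⟨_, eq_single_of_sum_le i_concentrated⟩
  have sum_mem := sum_mem_Icc_of_pairDefect_eq_ten h
  rw [Fintype.sum_pi_single', Finset.mem_Icc] at sum_mem
  have defect := pairDefect_single_add i c
  rw [h] at defect
  obtain rfl | rfl : c = 1 ∨ c = 2 := by omega
  · exact .inr ⟨by omega, i, rfl⟩
  · exact .inl ⟨by omega, i, rfl⟩

theorem sum_sum_eq_two_mul_sum_increasingPair_add [LinearOrder ι] {f : ι → ι → ℕ}
    (hf : ∀ i j, f i j = f j i) :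
    ∑ i, ∑ j, f i j = 2 * (∑ q : IncreasingPair ι, f q.1.1 q.1.2) + ∑ i, f i i := by
  have sum_pairs : ∑ q : IncreasingPair ι, f q.1.1 q.1.2 =
      ∑ i, ∑ j, if i < j then f i j else 0 := by
    rw [← Fintype.sum_prod_type' (f := fun i j => if i < j then f i j else 0),
      ← Finset.sum_filter]
    exact (Finset.sum_subtype _ (by simp) fun q : ι × ι => f q.1 q.2).symm
  have trichotomy (i j : ι) : f i j = (if i < j then f i j else 0) +
      (if j < i then f j i else 0) + if i = j then f i j else 0 := by
    rcases lt_trichotomy i j with h | rfl | h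
    · simp [h, h.not_gt, h.ne]
    · simp
    · simp [h, h.not_gt, h.ne', hf i j]
  calc ∑ i, ∑ j, f i j
      = (∑ i, ∑ j, if i < j then f i j else 0) + (∑ i, ∑ j, if j < i then f j i else 0) +
          ∑ i, ∑ j, if i = j then f i j else 0 := by
        simp only [← Finset.sum_add_distrib, ← trichotomy]
    _ = 2 * (∑ q : IncreasingPair ι, f q.1.1 q.1.2) + ∑ i, f i i := by
        rw [Finset.sum_comm (f := fun i j => if j < i then f j i else 0), ← sum_pairs, ← two_mul]
        simp only [Finset.sum_ite_eq, Finset.mem_univ, if_true]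

theorem SchurMultiplier.natCard_eq_pow_sum_min [LinearOrder ι] {p : ℕ} {x : ι → ℕ} {G : Type*}
    [CommGroup G] (e : G ≃* ∀ i, Multiplicative (ZMod (p ^ x i))) :
    Nat.card (SchurMultiplier G) = p ^ ∑ q : IncreasingPair ι, min (x q.1.1) (x q.1.2) := by
  rw [natCard_eq_prod_pairGCD e, ← Finset.prod_pow_eq_pow_sum]
  exact Finset.prod_congr rfl fun q _ => gcd_pow_pow_eq_pow_min p _ _

theorem pairDefect_eq_two_mul {p n t : ℕ} (hp : 1 < p) {y : ι → ℕ} {G : Type*} [CommGroup G]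
    (e : G ≃* ∀ i, Multiplicative (ZMod (p ^ (y i + 1)))) (hG : Nat.card G = p ^ n)
    (hM : Nat.card (SchurMultiplier G) * p ^ t = p ^ (n * (n - 1) / 2)) :
    pairDefect y = 2 * t := by
  let : LinearOrder ι := LinearOrder.lift' (Fintype.equivFin ι) (Fintype.equivFin ι).injective
  have order_eq : ∑ i, (y i + 1) = n := by
    rw [Nat.card_congr e.toEquiv, natCard_pi_zmod_pow] at hG
    exact Nat.pow_right_injective hp hG
  have multiplier_eq : ∑ q : IncreasingPair ι, min (y q.1.1 + 1) (y q.1.2 + 1) + t =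
      n * (n - 1) / 2 := by
    rw [SchurMultiplier.natCard_eq_pow_sum_min e, ← pow_add] at hM
    exact Nat.pow_right_injective hp hM
  have sum_min := sum_sum_eq_two_mul_sum_increasingPair_add
    (f := fun i j => min (y i + 1) (y j + 1)) fun i j => min_comm _ _
  have defect := sum_succ_mul_sum_succ_eq_pairDefect_add y
  have half : 2 * (n * (n - 1) / 2) + n = n * n := by
    rw [Nat.mul_div_cancel' (Nat.even_mul_pred_self n).two_dvd, Nat.mul_sub_one,
      Nat.sub_add_cancel (Nat.le_mul_self n)]
  simp only [min_self, order_eq] at sum_min defect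
  omega

end PairDefect

theorem abelian_classification_t_five (p n : ℕ) (hp : p.Prime)
    (G : Type*) [CommGroup G] [Finite G] (hG : Nat.card G = p ^ n)
    (hM : Nat.card (SchurMultiplier G) * p ^ 5 = p ^ (n * (n - 1) / 2)) :
    Nonempty (G ≃* Multiplicative (ZMod (p ^ 3)) × Multiplicative (ZMod p)) ∨
      Nonempty (G ≃* Multiplicative (ZMod (p ^ 2)) × (Fin 4 → Multiplicative (ZMod p))) := by
  classical
  obtain ⟨ι, _, y, ⟨e⟩⟩ := exists_mulEquiv_pi_zmod_prime_pow hp (IsPGroup.of_card hG)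
  have defect : pairDefect y = 10 := pairDefect_eq_two_mul hp.one_lt e hG hM
  have other_factors {i : ι} {c : ℕ} (j : ι) (hj : j ≠ i) :
      p ^ ((Pi.single i c : ι → ℕ) j + 1) = p := by
    rw [Pi.single_eq_of_ne hj, zero_add, pow_one]
  rcases exists_eq_single_of_pairDefect_eq_ten defect with ⟨hcard, i, rfl⟩ | ⟨hcard, i, rfl⟩
  · obtain ⟨split⟩ := nonempty_pi_zmod_mulEquiv_prod i hcard other_factors
    rw [Pi.single_eq_same] at split
    exact .inl ⟨(e.trans split).trans ((MulEquiv.refl _).prodCongr (MulEquiv.funUnique (Fin 1) _))⟩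
  · obtain ⟨split⟩ := nonempty_pi_zmod_mulEquiv_prod i hcard other_factors
    rw [Pi.single_eq_same] at split
    exact .inr ⟨e.trans split⟩
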